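/- arXiv:2510.01813 — 2 statements merged into one kernel-verified Lean document; each statement's English description precedes it below -/
import Mathlib

section
/- (Monotonicity of the frontier minimum in parallel SGRAND) Assume ℓ_i ≥ 0 for all i and ℓ_{r_1} ≤ ℓ_{r_2} ≤ … ≤ ℓ_{r_N}. Let S ⊆ F_2^N be finite and nonempty, let E ⊆ S be nonempty, let E^+ ⊆ F_2^N be the set of all children (in the EP tree) of elements of E, and set S' = (S \ E) ∪ E^+. If S' is nonempty, then min_{e ∈ S} ζ(e) ≤ min_{e ∈ S'} ζ(e). -/
open scoped BigOperators

/-- `j*(e)`: the (1-indexed) largest position `j` with `e_{r_j} = 1`; `j*(0) = 0`. -/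
def jstar {N : ℕ} (r : Equiv.Perm (Fin N)) (e : Fin N → ZMod 2) : ℕ :=
  (Finset.univ.filter fun j : Fin N => e (r j) = 1).sup fun j => (j : ℕ) + 1

/-- The child relation of the EP tree on `F₂^N`: the root `0` has a single child
(the vector with a `1` in coordinate `r_1`); a nonzero `e` with `j*(e) < N` has a
left child (coordinate `r_{j*}` set to `0`, coordinate `r_{j*+1}` set to `1`) and a
right child (coordinate `r_{j*+1}` set to `1`); a node with `j*(e) = N` has no children. -/
def Child {N : ℕ} (r : Equiv.Perm (Fin N)) (e c : Fin N → ZMod 2) : Prop :=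
  (e = 0 ∧ ∃ h : 0 < N,
    c = Function.update (0 : Fin N → ZMod 2) (r ⟨0, h⟩) 1) ∨
  (e ≠ 0 ∧ ∃ h : jstar r e < N,
    c = Function.update
        (Function.update e (r ⟨jstar r e - 1, lt_of_le_of_lt (Nat.sub_le _ _) h⟩) 0)
        (r ⟨jstar r e, h⟩) 1 ∨
    c = Function.update e (r ⟨jstar r e, h⟩) 1)

/-- Soft weight of an error pattern: `ζ(e) = Σ_{i : e_i = 1} ℓ_i`. -/
noncomputable def zeta {N : ℕ} (ℓ : Fin N → ℝ) (e : Fin N → ZMod 2) : ℝ :=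
  ∑ i, if e i = 1 then ℓ i else 0

/-!
No child in the EP tree is lighter than its parent. A right child, or the child of the root, only
sets a further coordinate to `1`. In a left child, the `1` at position `j*(e)` moves to position
`j*(e) + 1`, which is free by maximality of `j*(e)` and carries at least as much weight.
Replacing elements of the frontier by their children therefore cannot lower its minimum.
-/

section Weight

variable {N : ℕ} {ℓ : Fin N → ℝ} {e : Fin N → ZMod 2} {a b : Fin N}

theorem zeta_update_add (ℓ : Fin N → ℝ) (e : Fin N → ZMod 2) (a : Fin N) (v : ZMod 2) :
    zeta ℓ (Function.update e a v) + (if e a = 1 then ℓ a else 0) =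
      zeta ℓ e + (if v = 1 then ℓ a else 0) := by
  let term (i : Fin N) (x : ZMod 2) : ℝ := if x = 1 then ℓ i else 0
  have zeta_update_eq : zeta ℓ (Function.update e a v) =
      term a v + ∑ i ∈ Finset.univ \ {a}, term i (e i) := by
    rw [← Finset.sum_update_of_mem (Finset.mem_univ a)]
    exact Finset.sum_congr rfl fun i _ => Function.apply_update term e a v i
  have zeta_eq : zeta ℓ e = term a (e a) + ∑ i ∈ Finset.univ \ {a}, term i (e i) :=
    Finset.sum_eq_add_sum_sdiff_singleton_of_mem (Finset.mem_univ a) _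
  rw [zeta_update_eq, zeta_eq]
  ring

theorem zeta_update_one_of_ne_one (h_free : e a ≠ 1) :
    zeta ℓ (Function.update e a 1) = zeta ℓ e + ℓ a := by
  simpa [h_free] using zeta_update_add ℓ e a 1

theorem zeta_le_zeta_update_zero_add (ha : 0 ≤ ℓ a) :
    zeta ℓ e ≤ zeta ℓ (Function.update e a 0) + ℓ a := by
  have h := zeta_update_add ℓ e a 0
  rw [if_neg zero_ne_one] at h
  split_ifs at h <;> linarith

theorem zeta_le_zeta_update_one (ha : 0 ≤ ℓ a) :
    zeta ℓ e ≤ zeta ℓ (Function.update e a 1) := by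
  by_cases h_one : e a = 1
  · rw [← h_one, Function.update_eq_self]
  · rw [zeta_update_one_of_ne_one h_one]
    exact le_add_of_nonneg_right ha

theorem zeta_le_zeta_update_zero_update_one (ha : 0 ≤ ℓ a) (hab : ℓ a ≤ ℓ b) (h_free : e b ≠ 1) :
    zeta ℓ e ≤ zeta ℓ (Function.update (Function.update e a 0) b 1) := by
  have h_still_free : Function.update e a 0 b ≠ 1 := by
    rw [Function.update_apply]
    split_ifs
    exacts [zero_ne_one, h_free]
  calc zeta ℓ e ≤ zeta ℓ (Function.update e a 0) + ℓ a := zeta_le_zeta_update_zero_add ha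
    _ ≤ zeta ℓ (Function.update e a 0) + ℓ b := by gcongr
    _ = zeta ℓ (Function.update (Function.update e a 0) b 1) :=
      (zeta_update_one_of_ne_one h_still_free).symm

end Weight

section Tree

variable {N : ℕ} {r : Equiv.Perm (Fin N)} {e c : Fin N → ZMod 2}

theorem lt_jstar_of_apply_eq_one {j : Fin N} (hj : e (r j) = 1) : (j : ℕ) < jstar r e :=
  Finset.le_sup (f := fun j : Fin N => (j : ℕ) + 1) (Finset.mem_filter_univ j |>.mpr hj)

theorem apply_jstar_ne_one (h : jstar r e < N) : e (r ⟨jstar r e, h⟩) ≠ 1 :=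
  fun h_one => (lt_jstar_of_apply_eq_one h_one).false

theorem Child.zeta_le {ℓ : Fin N → ℝ} (h_nonneg : ∀ i, 0 ≤ ℓ i) (h_mono : Monotone (ℓ ∘ r))
    (hc : Child r e c) : zeta ℓ e ≤ zeta ℓ c := by
  rcases hc with ⟨rfl, h, rfl⟩ | ⟨-, h, rfl | rfl⟩
  · exact zeta_le_zeta_update_one (h_nonneg _)
  · have h_le : ℓ (r ⟨jstar r e - 1, (Nat.sub_le _ _).trans_lt h⟩) ≤ ℓ (r ⟨jstar r e, h⟩) :=
      h_mono (Fin.mk_le_mk.mpr (Nat.sub_le _ _))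
    exact zeta_le_zeta_update_zero_update_one (h_nonneg _) h_le (apply_jstar_ne_one h)
  · exact zeta_le_zeta_update_one (h_nonneg _)

end Tree

/-- monotonicity of the frontier minimum in parallel SGRAND: with
nonnegative reliabilities sorted along `r`, if `E ⊆ S` are nonempty, `E⁺` is the set
of all EP-tree children of elements of `E`, and `S' = (S \ E) ∪ E⁺` is nonempty, then
`min_{e ∈ S} ζ(e) ≤ min_{e ∈ S'} ζ(e)`. -/
theorem stmt11 {N : ℕ} (r : Equiv.Perm (Fin N)) (ℓ : Fin N → ℝ)
    (hnn : ∀ i, 0 ≤ ℓ i)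
    (hsorted : ∀ i j : Fin N, i ≤ j → ℓ (r i) ≤ ℓ (r j))
    (S E Eplus S' : Finset (Fin N → ZMod 2))
    (hSne : S.Nonempty) (hEne : E.Nonempty) (hES : E ⊆ S)
    (hEplus : ∀ c, c ∈ Eplus ↔ ∃ e ∈ E, Child r e c)
    (hS' : S' = (S \ E) ∪ Eplus)
    (hS'ne : S'.Nonempty) :
    S.inf' hSne (zeta ℓ) ≤ S'.inf' hS'ne (zeta ℓ) := by
  refine Finset.le_inf' _ _ fun c hc => ?_
  rw [hS', Finset.mem_union, Finset.mem_sdiff, hEplus] at hc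
  rcases hc with ⟨hcS, -⟩ | ⟨e, heE, h_child⟩
  · exact Finset.inf'_le _ hcS
  · exact Finset.inf'_le_of_le _ (hES heE) (h_child.zeta_le hnn hsorted)
end

section
/- (Theorem 2, correctness of hybrid enhanced ORBGRAND) Assume ℓ_i ≥ 0 for all i and ℓ_{r_1} ≤ ℓ_{r_2} ≤ … ≤ ℓ_{r_N}. Let V ⊆ F_2^N be an arbitrary set of valid error patterns. Let E_0 ⊆ F_2^N contain 0 and be parent-closed: for every nonzero e ∈ E_0 the parent of e lies in E_0. Let S_0 = { e ∈ F_2^N : e ∉ E_0 and the parent of e lies in E_0 }. Suppose e* ∈ E_0 ∩ V satisfies ζ(e*) ≤ ζ(e) for all e ∈ E_0 ∩ V, and ζ(e*) < ζ(s) for all s ∈ S_0. Then ζ(e*) ≤ ζ(e) for all e ∈ V. -/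
open scoped BigOperators

/-!
The soft weight never decreases along an edge of the EP tree: a right child gains a nonnegative
reliability, and a left child trades one for the next larger in the sorted order. Every pattern
descends from the root `0 ∈ E₀`, so the path from `0` to a pattern outside `E₀` leaves `E₀` through
some `s ∈ S₀`, and that pattern weighs at least as much as `s`.
-/

open Function Relation

lemma exists_exit_of_reflTransGen {α : Type*} {R : α → α → Prop} {E : Set α} {a b : α}
    (hab : ReflTransGen R a b) (ha : a ∈ E) (hb : b ∉ E) :
    ∃ s ∉ E, (∃ p ∈ E, R p s) ∧ ReflTransGen R s b := by
  induction hab with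
  | refl => exact absurd ha hb
  | @tail p c _ hpc ih =>
    by_cases hp : p ∈ E
    · exact ⟨c, hb, ⟨p, hp, hpc⟩, .refl⟩
    · obtain ⟨s, hs, hps, hsp⟩ := ih hp
      exact ⟨s, hs, hps, hsp.tail hpc⟩

lemma eq_zero_or_eq_one_of_zmod_two (a : ZMod 2) : a = 0 ∨ a = 1 := by
  decide +revert

section Jstar

variable {N : ℕ} {r : Equiv.Perm (Fin N)} {e : Fin N → ZMod 2} {k : Fin N}

lemma jstar_le_iff {n : ℕ} : jstar r e ≤ n ↔ ∀ j : Fin N, n ≤ j → e (r j) = 0 := by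
  have hsup : jstar r e ≤ n ↔ ∀ j : Fin N, e (r j) = 1 → (j : ℕ) + 1 ≤ n := by
    simp [jstar]
  refine hsup.trans (forall_congr' fun j => ?_)
  rcases eq_zero_or_eq_one_of_zmod_two (e (r j)) with h | h <;> simp [h]

lemma jstar_eq_zero_iff : jstar r e = 0 ↔ e = 0 := by
  rw [← Nat.le_zero, jstar_le_iff, funext_iff]
  simpa using (r.surjective.forall (p := fun i => e i = 0)).symm

lemma jstar_eq_succ_iff :
    jstar r e = k + 1 ↔ e (r k) = 1 ∧ ∀ j, k < j → e (r j) = 0 := by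
  have hle : jstar r e ≤ k + 1 ↔ ∀ j, k < j → e (r j) = 0 := jstar_le_iff
  have hle_pred : jstar r e ≤ k ↔ ∀ j, k ≤ j → e (r j) = 0 := jstar_le_iff
  rw [Nat.eq_iff_le_and_ge, Nat.succ_le_iff, ← not_le, hle, hle_pred, and_comm]
  refine and_congr_left fun hgt => ?_
  have hzero : (∀ j, k ≤ j → e (r j) = 0) ↔ e (r k) = 0 :=
    ⟨fun h => h k le_rfl, fun h j hj => hj.eq_or_lt.elim (fun hkj => hkj ▸ h) (hgt j)⟩
  rw [hzero]
  rcases eq_zero_or_eq_one_of_zmod_two (e (r k)) with h | h <;> simp [h]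

lemma jstar_le (r : Equiv.Perm (Fin N)) (e : Fin N → ZMod 2) : jstar r e ≤ N :=
  jstar_le_iff.mpr fun j hj => absurd j.isLt hj.not_gt

lemma exists_jstar_eq_succ (he : e ≠ 0) : ∃ k : Fin N, jstar r e = k + 1 := by
  obtain ⟨n, hn⟩ := Nat.exists_eq_succ_of_ne_zero (mt jstar_eq_zero_iff.mp he : jstar r e ≠ 0)
  exact ⟨⟨n, by have := jstar_le r e; omega⟩, hn⟩

end Jstar

section Child

variable {N : ℕ} {r : Equiv.Perm (Fin N)} {p e : Fin N → ZMod 2}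

lemma child_zero_iff :
    Child r 0 e ↔ ∃ h : 0 < N, e = update (0 : Fin N → ZMod 2) (r ⟨0, h⟩) 1 := by
  simp [Child]

lemma child_iff_of_jstar_eq_succ {k : Fin N} (hk : jstar r p = k + 1) :
    Child r p e ↔ ∃ h : (k : ℕ) + 1 < N,
      e = update (update p (r k) 0) (r ⟨k + 1, h⟩) 1 ∨ e = update p (r ⟨k + 1, h⟩) 1 := by
  have hp : p ≠ 0 := mt jstar_eq_zero_iff.mpr (hk.trans_ne (Nat.succ_ne_zero k))
  simp [Child, hp, hk]

lemma child_zero_of_jstar_eq_one (he : jstar r e = 1) : Child r 0 e := by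
  have hN : 0 < N := by have := jstar_le r e; omega
  obtain ⟨hfirst, hgt⟩ := (jstar_eq_succ_iff (k := ⟨0, hN⟩)).mp he
  refine child_zero_iff.mpr ⟨hN, eq_update_iff.mpr ⟨hfirst, fun i hi => ?_⟩⟩
  obtain ⟨j, rfl⟩ := r.surjective i
  exact hgt j (Nat.pos_of_ne_zero fun hj => hi (congrArg r (Fin.ext hj)))

lemma exists_parent_of_jstar_eq_add_two {n : ℕ} (he : jstar r e = n + 2) :
    ∃ p, Child r p e ∧ jstar r p = n + 1 := by
  have hN : n + 1 < N := by have := jstar_le r e; omega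
  let prev : Fin N := ⟨n, by omega⟩
  let last : Fin N := ⟨n + 1, hN⟩
  obtain ⟨hlast, hgt⟩ := (jstar_eq_succ_iff (k := last)).mp he
  have hne : prev ≠ last := by simp [prev, last]
  have hlast_self : update e (r last) 1 = e := update_eq_self_iff.mpr hlast.symm
  -- Moving the last one back by a position, onto whatever stands there, undoes both child steps.
  let p := update (update e (r last) 0) (r prev) 1
  have hp : jstar r p = prev + 1 := by
    refine jstar_eq_succ_iff.mpr ⟨by simp [p], fun j hj => ?_⟩
    have hle : last ≤ j := Nat.succ_le_of_lt hj
    rcases hle.eq_or_lt with rfl | hj'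
    · simp [p, hne.symm]
    · simp [p, hj.ne', hj'.ne', hgt j hj']
  refine ⟨p, (child_iff_of_jstar_eq_succ hp).mpr ⟨hN, ?_⟩, hp⟩
  refine (eq_zero_or_eq_one_of_zmod_two (e (r prev))).imp (fun hprev => ?_) fun hprev => ?_
  · have hprev_self : update e (r prev) 0 = e := update_eq_self_iff.mpr hprev.symm
    change e = update (update p (r prev) 0) (r last) 1
    rw [update_idem, update_comm (r.injective.ne hne), update_idem, hlast_self, hprev_self]
  · have hprev_self : update e (r prev) 1 = e := update_eq_self_iff.mpr hprev.symm
    change e = update p (r last) 1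
    rw [update_comm (r.injective.ne hne), update_idem, hlast_self, hprev_self]

lemma reflTransGen_child_zero (r : Equiv.Perm (Fin N)) (e : Fin N → ZMod 2) :
    ReflTransGen (Child r) 0 e := by
  induction hn : jstar r e generalizing e with
  | zero => rw [jstar_eq_zero_iff.mp hn]
  | succ n ih =>
    cases n with
    | zero => exact .single (child_zero_of_jstar_eq_one hn)
    | succ n =>
      obtain ⟨p, hpe, hp⟩ := exists_parent_of_jstar_eq_add_two hn
      exact (ih p hp).tail hpe

end Child

section Zeta

variable {N : ℕ} {r : Equiv.Perm (Fin N)} {ℓ : Fin N → ℝ}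

lemma zeta_update (ℓ : Fin N → ℝ) (e : Fin N → ZMod 2) (i : Fin N) (a : ZMod 2) :
    zeta ℓ (update e i a) =
      zeta ℓ e + ((if a = 1 then ℓ i else 0) - if e i = 1 then ℓ i else 0) := by
  rw [← sub_eq_iff_eq_add', zeta, zeta, ← Finset.sum_sub_distrib, Fintype.sum_eq_single i]
  · simp
  · intro x hx
    simp [hx]

lemma zeta_le_zeta_update_one_s17 {i : Fin N} (hi : 0 ≤ ℓ i) (e : Fin N → ZMod 2) :
    zeta ℓ e ≤ zeta ℓ (update e i 1) := by
  rw [zeta_update]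
  split_ifs <;> simp_all

lemma zeta_le_zeta_left_child (hsorted : Monotone (ℓ ∘ r)) {p : Fin N → ZMod 2} {k : Fin N}
    (hk : jstar r p = k + 1) (hN : (k : ℕ) + 1 < N) :
    zeta ℓ p ≤ zeta ℓ (update (update p (r k) 0) (r ⟨k + 1, hN⟩) 1) := by
  obtain ⟨hlast, hgt⟩ := jstar_eq_succ_iff.mp hk
  have hlt : k < ⟨k + 1, hN⟩ := Nat.lt_succ_self k
  have hweight : ℓ (r k) ≤ ℓ (r ⟨k + 1, hN⟩) := hsorted hlt.le
  have hmove : zeta ℓ (update (update p (r k) 0) (r ⟨k + 1, hN⟩) 1) =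
      zeta ℓ p - ℓ (r k) + ℓ (r ⟨k + 1, hN⟩) := by
    simp [zeta_update, hlast, hgt _ hlt, hlt.ne', sub_eq_add_neg]
  linarith

lemma zeta_le_of_child (hnn : 0 ≤ ℓ) (hsorted : Monotone (ℓ ∘ r)) {p e : Fin N → ZMod 2}
    (hpe : Child r p e) : zeta ℓ p ≤ zeta ℓ e := by
  rcases eq_or_ne p 0 with rfl | hp
  · obtain ⟨_, rfl⟩ := child_zero_iff.mp hpe
    exact zeta_le_zeta_update_one_s17 (hnn _) 0
  obtain ⟨k, hk⟩ := exists_jstar_eq_succ (r := r) hp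
  obtain ⟨hN, rfl | rfl⟩ := (child_iff_of_jstar_eq_succ hk).mp hpe
  · exact zeta_le_zeta_left_child hsorted hk hN
  · exact zeta_le_zeta_update_one_s17 (hnn _) p

lemma zeta_le_of_reflTransGen_child (hnn : 0 ≤ ℓ) (hsorted : Monotone (ℓ ∘ r))
    {p e : Fin N → ZMod 2} (hpe : ReflTransGen (Child r) p e) : zeta ℓ p ≤ zeta ℓ e := by
  induction hpe with
  | refl => rfl
  | tail _ hchild ih => exact ih.trans (zeta_le_of_child hnn hsorted hchild)

end Zeta

theorem stmt17_general {N : ℕ} {r : Equiv.Perm (Fin N)} {ℓ : Fin N → ℝ}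
    (hnn : 0 ≤ ℓ) (hsorted : Monotone (ℓ ∘ r)) {V E₀ : Set (Fin N → ZMod 2)} (hzero : 0 ∈ E₀)
    {w : ℝ} (hE₀ : ∀ e ∈ E₀ ∩ V, w ≤ zeta ℓ e)
    (hS₀ : ∀ s ∉ E₀, (∃ p ∈ E₀, Child r p s) → w ≤ zeta ℓ s) :
    ∀ e ∈ V, w ≤ zeta ℓ e := by
  intro e heV
  by_cases he : e ∈ E₀
  · exact hE₀ e ⟨he, heV⟩
  · obtain ⟨s, hs, hps, hse⟩ :=
      exists_exit_of_reflTransGen (reflTransGen_child_zero r e) hzero he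
    exact (hS₀ s hs hps).trans (zeta_le_of_reflTransGen_child hnn hsorted hse)

/-- Theorem 2, correctness of hybrid enhanced ORBGRAND: with
nonnegative reliabilities sorted along `r`, let `V` be any set of valid error
patterns, `E₀ ∋ 0` parent-closed, and `S₀` its envelope. If `e* ∈ E₀ ∩ V` satisfies
`ζ(e*) ≤ ζ(e)` for all `e ∈ E₀ ∩ V` and `ζ(e*) < ζ(s)` for all `s ∈ S₀`, then
`ζ(e*) ≤ ζ(e)` for all `e ∈ V`. -/
theorem stmt17 {N : ℕ} (r : Equiv.Perm (Fin N)) (ℓ : Fin N → ℝ)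
    (hnn : ∀ i, 0 ≤ ℓ i)
    (hsorted : ∀ i j : Fin N, i ≤ j → ℓ (r i) ≤ ℓ (r j))
    (V : Set (Fin N → ZMod 2))
    (E₀ : Set (Fin N → ZMod 2)) (hzero : (0 : Fin N → ZMod 2) ∈ E₀)
    (hclosed : ∀ e ∈ E₀, e ≠ 0 → ∀ p : Fin N → ZMod 2, Child r p e → p ∈ E₀)
    (S₀ : Set (Fin N → ZMod 2))
    (hS₀ : S₀ = {e | e ∉ E₀ ∧ ∃ p ∈ E₀, Child r p e})
    (estar : Fin N → ZMod 2) (hstar : estar ∈ E₀ ∩ V)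
    (hmin1 : ∀ e ∈ E₀ ∩ V, zeta ℓ estar ≤ zeta ℓ e)
    (hmin2 : ∀ s ∈ S₀, zeta ℓ estar < zeta ℓ s) :
    ∀ e ∈ V, zeta ℓ estar ≤ zeta ℓ e := by
  subst hS₀
  exact stmt17_general hnn hsorted hzero hmin1 fun s hs hps => (hmin2 s ⟨hs, hps⟩).le
end
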